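/- Suppose λ₁ ≤ ρ_q ≤ λ₁ + (λ₂−λ₁)/(2+χ_P). Then: (1) Y is a convex set; (2) the minimization problem min_{y ∈ Y} φ(y) has a unique solution y*, namely y* = ψ(u₁), with minimum value φ(y*) = λ₁; and (3) the eigenvector u₁ is recovered as u₁ = ψ†(y*). -/

import Mathlib

open Matrix

noncomputable def Mnorm {n : ℕ} (M : Matrix (Fin n) (Fin n) ℝ) (x : Fin n → ℝ) : ℝ :=
  Real.sqrt (x ⬝ᵥ (M *ᵥ x))

noncomputable def Rq {n : ℕ} (A M : Matrix (Fin n) (Fin n) ℝ) (x : Fin n → ℝ) : ℝ :=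
  (x ⬝ᵥ (A *ᵥ x)) / (x ⬝ᵥ (M *ᵥ x))

/-- ψ(x) = QᵀMx / (qᵀMx) -/
noncomputable def psiMap {n m : ℕ} (M : Matrix (Fin n) (Fin n) ℝ) (q : Fin n → ℝ)
    (Q : Matrix (Fin n) (Fin m) ℝ) (x : Fin n → ℝ) : Fin m → ℝ :=
  (q ⬝ᵥ (M *ᵥ x))⁻¹ • ((Qᵀ * M) *ᵥ x)

/-- ψ†(y) = (Qy + q)/‖Qy + q‖_M -/
noncomputable def psiDag {n m : ℕ} (M : Matrix (Fin n) (Fin n) ℝ) (q : Fin n → ℝ)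
    (Q : Matrix (Fin n) (Fin m) ℝ) (y : Fin m → ℝ) : Fin n → ℝ :=
  (Mnorm M (Q *ᵥ y + q))⁻¹ • (Q *ᵥ y + q)

/-- The hemisphere S₊ = {x : ‖x‖_M = 1, qᵀMx > 0}. -/
def Splus {n : ℕ} (M : Matrix (Fin n) (Fin n) ℝ) (q : Fin n → ℝ) : Set (Fin n → ℝ) :=
  {x | Mnorm M x = 1 ∧ 0 < q ⬝ᵥ (M *ᵥ x)}

/-- X = {x ∈ S₊ : Rq(x) ≤ Rq(q)}. -/
def Xset {n : ℕ} (A M : Matrix (Fin n) (Fin n) ℝ) (q : Fin n → ℝ) : Set (Fin n → ℝ) :=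
  {x | x ∈ Splus M q ∧ Rq A M x ≤ Rq A M q}

/-- φ(y) = (yᵀBy + 2yᵀb + ρ)/(yᵀy + 1). -/
noncomputable def phiAux {m : ℕ} (B : Matrix (Fin m) (Fin m) ℝ) (b : Fin m → ℝ) (ρ : ℝ)
    (y : Fin m → ℝ) : ℝ :=
  (y ⬝ᵥ (B *ᵥ y) + 2 * (y ⬝ᵥ b) + ρ) / (y ⬝ᵥ y + 1)

/-!
In the chart `ψ`, the set `Y` is the sublevel set of the quadratic function
`y ↦ yᵀ(B - ρ I)y + 2 yᵀb`, so it is convex as soon as `B - ρ I` is positive semidefinite.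
By Ky Fan's inequality in dimension two, the Rayleigh quotients of two `M`-orthogonal vectors add
up to at least `λ₁ + λ₂`; applied to `q` and `Q y`, it shows that `B - ρ I` is positive semidefinite
whenever `ρ ≤ (λ₁ + λ₂) / 2`. The assumption involving `χ_P` implies this bound because `χ_P ≥ 0`.
-/

section QuadraticForms

variable {ι κ R : Type*} [Fintype ι] [Fintype κ]

lemma dotProduct_mulVec_comm_of_isSymm [CommSemiring R] {M : Matrix ι ι R} (hM : M.IsSymm)
    (x y : ι → R) : x ⬝ᵥ M *ᵥ y = y ⬝ᵥ M *ᵥ x := by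
  rw [← dotProduct_transpose_mulVec, hM.eq]

lemma mulVec_dotProduct_eq_dotProduct_transpose_mulVec [CommSemiring R] (Q : Matrix ι κ R)
    (y : κ → R) (v : ι → R) : (Q *ᵥ y) ⬝ᵥ v = y ⬝ᵥ Qᵀ *ᵥ v := by
  rw [dotProduct_transpose_mulVec, dotProduct_comm]

lemma dotProduct_mulVec_self_mulVec_add [CommRing R] {A : Matrix ι ι R} (hA : A.IsSymm)
    (Q : Matrix ι κ R) (q : ι → R) (y : κ → R) :
    (Q *ᵥ y + q) ⬝ᵥ A *ᵥ (Q *ᵥ y + q) =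
      y ⬝ᵥ (Qᵀ * A * Q) *ᵥ y + 2 * (y ⬝ᵥ (Qᵀ * A) *ᵥ q) + q ⬝ᵥ A *ᵥ q := by
  rw [mulVec_add, dotProduct_add, add_dotProduct, add_dotProduct,
    dotProduct_mulVec_comm_of_isSymm hA q (Q *ᵥ y)]
  simp only [mulVec_dotProduct_eq_dotProduct_transpose_mulVec, mulVec_mulVec, Matrix.mul_assoc]
  ring

lemma sq_dotProduct_mulVec_le {M : Matrix ι ι ℝ} (hM : M.PosSemidef) (x y : ι → ℝ) :
    (x ⬝ᵥ M *ᵥ y) ^ 2 ≤ (x ⬝ᵥ M *ᵥ x) * (y ⬝ᵥ M *ᵥ y) := by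
  classical
  have hsymm : M.IsSymm := isHermitian_iff_isSymm.mp hM.isHermitian
  simpa only [toBilin'_apply'] using
    (toBilin' M).apply_sq_le_of_symm
      (fun z => by simpa [toBilin'_apply'] using hM.dotProduct_mulVec_nonneg z)
      ⟨fun z w => by simpa [toBilin'_apply'] using dotProduct_mulVec_comm_of_isSymm hsymm z w⟩ x y

-- Cauchy–Schwarz for `y` and the component of `u` orthogonal to `p`.
lemma sq_mul_add_sq_le_of_orthogonal {M : Matrix ι ι ℝ} (hM : M.PosSemidef) {u p y : ι → ℝ}
    (hu : u ⬝ᵥ M *ᵥ u = 1) (hp : p ⬝ᵥ M *ᵥ p = 1) (hpy : p ⬝ᵥ M *ᵥ y = 0) :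
    (u ⬝ᵥ M *ᵥ p) ^ 2 * (y ⬝ᵥ M *ᵥ y) + (u ⬝ᵥ M *ᵥ y) ^ 2 ≤ y ⬝ᵥ M *ᵥ y := by
  have hsymm : M.IsSymm := isHermitian_iff_isSymm.mp hM.isHermitian
  set c := u ⬝ᵥ M *ᵥ p with hc
  have hnorm : (u - c • p) ⬝ᵥ M *ᵥ (u - c • p) = 1 - c ^ 2 := by
    simp only [mulVec_sub, mulVec_smul, dotProduct_sub, sub_dotProduct, smul_dotProduct,
      dotProduct_smul, smul_eq_mul, hu, hp, dotProduct_mulVec_comm_of_isSymm hsymm p u, ← hc]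
    ring
  have hinner : (u - c • p) ⬝ᵥ M *ᵥ y = u ⬝ᵥ M *ᵥ y := by
    rw [sub_dotProduct, smul_dotProduct, hpy, smul_zero, sub_zero]
  have hcs := sq_dotProduct_mulVec_le hM (u - c • p) y
  rw [hnorm, hinner] at hcs
  linarith

lemma pos_of_mulVec_eq_smul_mulVec {B P : Matrix ι ι ℝ} (hB : B.PosDef)
    (hP : P.PosDef) {ξ : ℝ} {v : ι → ℝ} (hv : v ≠ 0) (h : B *ᵥ v = ξ • P *ᵥ v) : 0 < ξ := by
  have hBv : 0 < v ⬝ᵥ B *ᵥ v := by simpa using hB.dotProduct_mulVec_pos hv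
  have hPv : 0 < v ⬝ᵥ P *ᵥ v := by simpa using hP.dotProduct_mulVec_pos hv
  rw [h, dotProduct_smul, smul_eq_mul] at hBv
  exact pos_of_mul_pos_left hBv hPv.le

lemma convexOn_dotProduct_mulVec_add {C : Matrix ι ι ℝ} (hC : C.PosSemidef) (d : ι → ℝ) :
    ConvexOn ℝ Set.univ fun y => y ⬝ᵥ C *ᵥ y + 2 * (y ⬝ᵥ d) := by
  refine ⟨convex_univ, fun x _ y _ s t hs ht hst => ?_⟩
  have hsymm : C.IsSymm := isHermitian_iff_isSymm.mp hC.isHermitian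
  have hdiff : 0 ≤ s * t * ((x - y) ⬝ᵥ C *ᵥ (x - y)) :=
    mul_nonneg (mul_nonneg hs ht) (by simpa using hC.dotProduct_mulVec_nonneg (x - y))
  obtain rfl : t = 1 - s := by linarith
  simp only [mulVec_add, mulVec_sub, mulVec_smul, dotProduct_sub, sub_dotProduct, dotProduct_add,
    add_dotProduct, smul_dotProduct, dotProduct_smul, smul_eq_mul,
    dotProduct_mulVec_comm_of_isSymm hsymm y x] at hdiff ⊢
  linarith

end QuadraticForms

section Normalization

variable {n : ℕ} {A M : Matrix (Fin n) (Fin n) ℝ} {x : Fin n → ℝ}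

lemma Mnorm_eq_one_iff : Mnorm M x = 1 ↔ x ⬝ᵥ M *ᵥ x = 1 :=
  Real.sqrt_eq_one

lemma Mnorm_smul (M : Matrix (Fin n) (Fin n) ℝ) (c : ℝ) (x : Fin n → ℝ) :
    Mnorm M (c • x) = |c| * Mnorm M x := by
  rw [Mnorm, Mnorm, mulVec_smul, dotProduct_smul, smul_dotProduct, smul_smul, smul_eq_mul,
    Real.sqrt_mul (mul_self_nonneg c), Real.sqrt_mul_self_eq_abs]

lemma Rq_smul (A M : Matrix (Fin n) (Fin n) ℝ) {c : ℝ} (hc : c ≠ 0) (x : Fin n → ℝ) :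
    Rq A M (c • x) = Rq A M x := by
  simp only [Rq, mulVec_smul, dotProduct_smul, smul_dotProduct, smul_eq_mul]
  rw [mul_div_mul_left _ _ hc, mul_div_mul_left _ _ hc]

lemma Rq_eq_of_dotProduct_eq_one (A : Matrix (Fin n) (Fin n) ℝ) (hx : x ⬝ᵥ M *ᵥ x = 1) :
    Rq A M x = x ⬝ᵥ A *ᵥ x := by
  rw [Rq, hx, div_one]

lemma psiMap_smul {m : ℕ} (M : Matrix (Fin n) (Fin n) ℝ) (q : Fin n → ℝ)
    (Q : Matrix (Fin n) (Fin m) ℝ) {c : ℝ} (hc : c ≠ 0) (x : Fin n → ℝ) :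
    psiMap M q Q (c • x) = psiMap M q Q x := by
  rw [psiMap, psiMap, mulVec_smul, mulVec_smul, dotProduct_smul, smul_eq_mul, smul_smul, mul_inv,
    mul_right_comm, inv_mul_cancel₀ hc, one_mul]

end Normalization

section PencilEigenbasis

variable {ι : Type*} [Fintype ι] [DecidableEq ι]

lemma eq_sum_dotProduct_mulVec_smul {R : Type*} [CommRing R] {M : Matrix ι ι R} {u : ι → ι → R}
    (hu : ∀ i j, u i ⬝ᵥ M *ᵥ u j = if i = j then 1 else 0) (x : ι → R) :
    x = ∑ i, (u i ⬝ᵥ M *ᵥ x) • u i := by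
  have hleft : of u * M * (of u)ᵀ = 1 := by
    ext i j
    rw [Matrix.mul_assoc, one_apply, ← hu i j]
    rfl
  have hright : (of u)ᵀ * (of u * M) = 1 := mul_eq_one_comm.mp hleft
  calc x = (of u)ᵀ *ᵥ (of u *ᵥ (M *ᵥ x)) := by
        rw [mulVec_mulVec, mulVec_mulVec, Matrix.mul_assoc, hright, one_mulVec]
    _ = ∑ i, (u i ⬝ᵥ M *ᵥ x) • u i := by
        rw [mulVec_transpose, vecMul_eq_sum]
        rfl

/-- `u` is an `M`-orthonormal basis of eigenvectors of the pencil `(A, M)`, with eigenvalues `lam`.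
Linear independence and spanning are not fields: they follow, since `u` is indexed by the same type
as the coordinates. -/
structure IsPencilEigenbasis (A M : Matrix ι ι ℝ) (lam : ι → ℝ) (u : ι → ι → ℝ) : Prop where
  mulVec_eq : ∀ i, A *ᵥ u i = lam i • M *ᵥ u i
  orthonormal : ∀ i j, u i ⬝ᵥ M *ᵥ u j = if i = j then 1 else 0

namespace IsPencilEigenbasis

variable {A M : Matrix ι ι ℝ} {lam : ι → ℝ} {u : ι → ι → ℝ}

lemma dotProduct_self_eq_one (hu : IsPencilEigenbasis A M lam u) (i : ι) :
    u i ⬝ᵥ M *ᵥ u i = 1 := by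
  simp [hu.orthonormal]

lemma dotProduct_eq_sum (hu : IsPencilEigenbasis A M lam u) (x y : ι → ℝ) :
    x ⬝ᵥ y = ∑ i, (u i ⬝ᵥ M *ᵥ x) * (u i ⬝ᵥ y) := by
  conv_lhs => rw [eq_sum_dotProduct_mulVec_smul hu.orthonormal x]
  simp only [sum_dotProduct, smul_dotProduct, smul_eq_mul]

lemma dotProduct_mulVec_right_eq_sum_sq (hu : IsPencilEigenbasis A M lam u) (x : ι → ℝ) :
    x ⬝ᵥ M *ᵥ x = ∑ i, (u i ⬝ᵥ M *ᵥ x) ^ 2 := by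
  simp only [hu.dotProduct_eq_sum x (M *ᵥ x), sq]

lemma posSemidef_right (hu : IsPencilEigenbasis A M lam u) (hM : M.IsSymm) : M.PosSemidef :=
  .of_dotProduct_mulVec_nonneg (isHermitian_iff_isSymm.mpr hM) fun x => by
    rw [star_trivial, hu.dotProduct_mulVec_right_eq_sum_sq]
    positivity

lemma dotProduct_mulVec_left_eq_sum_sq (hu : IsPencilEigenbasis A M lam u) (hA : A.IsSymm)
    (hM : M.IsSymm) (x : ι → ℝ) : x ⬝ᵥ A *ᵥ x = ∑ i, lam i * (u i ⬝ᵥ M *ᵥ x) ^ 2 := by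
  rw [hu.dotProduct_eq_sum x (A *ᵥ x)]
  refine Finset.sum_congr rfl fun i _ => ?_
  rw [dotProduct_mulVec_comm_of_isSymm hA, hu.mulVec_eq, dotProduct_smul,
    dotProduct_mulVec_comm_of_isSymm hM, smul_eq_mul]
  ring

lemma mul_le_dotProduct_mulVec (hu : IsPencilEigenbasis A M lam u) (hA : A.IsSymm)
    (hM : M.IsSymm) {μ : ℝ} (hμ : ∀ i, μ ≤ lam i) (x : ι → ℝ) :
    μ * (x ⬝ᵥ M *ᵥ x) ≤ x ⬝ᵥ A *ᵥ x := by
  rw [hu.dotProduct_mulVec_right_eq_sum_sq, hu.dotProduct_mulVec_left_eq_sum_sq hA hM,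
    Finset.mul_sum]
  gcongr with i
  exact hμ i

lemma mul_sub_mul_sq_le_dotProduct_mulVec (hu : IsPencilEigenbasis A M lam u) (hA : A.IsSymm)
    (hM : M.IsSymm) {i₀ : ι} {μ : ℝ} (hμ : ∀ i ≠ i₀, μ ≤ lam i) (x : ι → ℝ) :
    μ * (x ⬝ᵥ M *ᵥ x) - (μ - lam i₀) * (u i₀ ⬝ᵥ M *ᵥ x) ^ 2 ≤ x ⬝ᵥ A *ᵥ x := by
  rw [hu.dotProduct_mulVec_right_eq_sum_sq, hu.dotProduct_mulVec_left_eq_sum_sq hA hM,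
    ← Finset.add_sum_erase _ _ (Finset.mem_univ i₀),
    ← Finset.add_sum_erase _ _ (Finset.mem_univ i₀), mul_add, Finset.mul_sum]
  have hrest : ∑ i ∈ Finset.univ.erase i₀, μ * (u i ⬝ᵥ M *ᵥ x) ^ 2 ≤
      ∑ i ∈ Finset.univ.erase i₀, lam i * (u i ⬝ᵥ M *ᵥ x) ^ 2 := by
    gcongr with i hi
    exact hμ i (Finset.ne_of_mem_erase hi)
  linarith

lemma eq_smul_of_dotProduct_mulVec_le (hu : IsPencilEigenbasis A M lam u) (hA : A.IsSymm)
    (hM : M.IsSymm) {i₀ : ι} (hlam : ∀ i ≠ i₀, lam i₀ < lam i) {x : ι → ℝ}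
    (hx : x ⬝ᵥ A *ᵥ x ≤ lam i₀ * (x ⬝ᵥ M *ᵥ x)) : x = (u i₀ ⬝ᵥ M *ᵥ x) • u i₀ := by
  have hnonneg : ∀ i, 0 ≤ (lam i - lam i₀) * (u i ⬝ᵥ M *ᵥ x) ^ 2 := fun i => by
    obtain rfl | hi := eq_or_ne i i₀
    · simp
    · exact mul_nonneg (sub_pos.mpr (hlam i hi)).le (sq_nonneg _)
  have hsum : ∑ i, (lam i - lam i₀) * (u i ⬝ᵥ M *ᵥ x) ^ 2 = 0 := by
    refine le_antisymm ?_ (Finset.sum_nonneg fun i _ => hnonneg i)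
    rw [hu.dotProduct_mulVec_right_eq_sum_sq, hu.dotProduct_mulVec_left_eq_sum_sq hA hM,
      Finset.mul_sum] at hx
    simpa only [sub_mul, Finset.sum_sub_distrib, sub_nonpos] using hx
  have hcoeff : ∀ i ≠ i₀, u i ⬝ᵥ M *ᵥ x = 0 := fun i hi => by
    have hterm := (Finset.sum_eq_zero_iff_of_nonneg fun i _ => hnonneg i).mp hsum i
      (Finset.mem_univ i)
    simpa [(sub_pos.mpr (hlam i hi)).ne'] using hterm
  conv_lhs => rw [eq_sum_dotProduct_mulVec_smul hu.orthonormal x]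
  exact Finset.sum_eq_single i₀ (fun i _ hi => by rw [hcoeff i hi, zero_smul]) (by simp)

-- Ky Fan's inequality for two vectors.
lemma add_mul_le_of_orthogonal (hu : IsPencilEigenbasis A M lam u) (hA : A.IsSymm)
    (hM : M.IsSymm) {i₀ : ι} {μ : ℝ} (hμ₀ : lam i₀ ≤ μ) (hμ : ∀ i ≠ i₀, μ ≤ lam i)
    {p y : ι → ℝ} (hp : p ⬝ᵥ M *ᵥ p = 1) (hpy : p ⬝ᵥ M *ᵥ y = 0) :
    (lam i₀ + μ) * (y ⬝ᵥ M *ᵥ y) ≤ (p ⬝ᵥ A *ᵥ p) * (y ⬝ᵥ M *ᵥ y) + y ⬝ᵥ A *ᵥ y := by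
  have hMpos := hu.posSemidef_right hM
  have hy : 0 ≤ y ⬝ᵥ M *ᵥ y := by simpa using hMpos.dotProduct_mulVec_nonneg y
  have hgap_p := hu.mul_sub_mul_sq_le_dotProduct_mulVec hA hM hμ p
  have hgap_y := hu.mul_sub_mul_sq_le_dotProduct_mulVec hA hM hμ y
  have hbessel := sq_mul_add_sq_le_of_orthogonal hMpos (hu.dotProduct_self_eq_one i₀) hp hpy
  rw [hp] at hgap_p
  linarith [mul_le_mul_of_nonneg_right hgap_p hy,
    mul_le_mul_of_nonneg_left hbessel (sub_nonneg.mpr hμ₀)]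

lemma le_Rq {n : ℕ} {A M : Matrix (Fin n) (Fin n) ℝ} {lam : Fin n → ℝ} {u : Fin n → Fin n → ℝ}
    (hu : IsPencilEigenbasis A M lam u) (hA : A.IsSymm) (hM : M.IsSymm) {μ : ℝ}
    (hμ : ∀ i, μ ≤ lam i) {x : Fin n → ℝ} (hx : x ⬝ᵥ M *ᵥ x = 1) : μ ≤ Rq A M x := by
  rw [Rq_eq_of_dotProduct_eq_one A hx]
  simpa only [hx, mul_one] using hu.mul_le_dotProduct_mulVec hA hM hμ x

lemma Rq_eigenvector {n : ℕ} {A M : Matrix (Fin n) (Fin n) ℝ} {lam : Fin n → ℝ}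
    {u : Fin n → Fin n → ℝ} (hu : IsPencilEigenbasis A M lam u) (i : Fin n) :
    Rq A M (u i) = lam i := by
  rw [Rq, hu.mulVec_eq, dotProduct_smul, hu.dotProduct_self_eq_one, smul_eq_mul, mul_one, div_one]

end IsPencilEigenbasis

end PencilEigenbasis

section ConvexSublevel

variable {m : ℕ}

lemma phiAux_le_self_iff (B : Matrix (Fin m) (Fin m) ℝ) (b : Fin m → ℝ) (ρ : ℝ) (y : Fin m → ℝ) :
    phiAux B b ρ y ≤ ρ ↔ y ⬝ᵥ (B - ρ • 1) *ᵥ y + 2 * (y ⬝ᵥ b) ≤ 0 := by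
  have hy : 0 ≤ y ⬝ᵥ y := by simpa using dotProduct_self_star_nonneg y
  rw [phiAux, div_le_iff₀ (by linarith), sub_mulVec, smul_mulVec, one_mulVec, dotProduct_sub,
    dotProduct_smul, smul_eq_mul]
  constructor <;> intro h <;> linarith

lemma convex_setOf_phiAux_le_self {B : Matrix (Fin m) (Fin m) ℝ} {ρ : ℝ}
    (hB : (B - ρ • 1).PosSemidef) (b : Fin m → ℝ) : Convex ℝ {y | phiAux B b ρ y ≤ ρ} := by
  simpa only [phiAux_le_self_iff, Set.mem_univ, true_and] using
    (convexOn_dotProduct_mulVec_add hB b).convex_le 0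

end ConvexSublevel

/-- The matrix `[q, Q]` has `M`-orthonormal columns, `[q, Q]ᵀ M [q, Q] = I`, written blockwise. The
block `qᵀ M Q` is omitted, being the transpose of `Qᵀ M q` for symmetric `M`. -/
structure IsOrthonormalFrame {ι κ : Type*} [Fintype ι] [DecidableEq κ] (M : Matrix ι ι ℝ)
    (q : ι → ℝ) (Q : Matrix ι κ ℝ) : Prop where
  dotProduct_self_eq_one : q ⬝ᵥ M *ᵥ q = 1
  transpose_mul_mul_eq_one : Qᵀ * M * Q = 1
  transpose_mul_mulVec_eq_zero : (Qᵀ * M) *ᵥ q = 0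

/-- The paper's `φ`: the Rayleigh quotient of `(A, M)` read in the chart `ψ` of the hemisphere
centred at `q`, with `B`, `b` and `ρ_q` replaced by their definitions. -/
noncomputable abbrev chartRq {n m : ℕ} (A M : Matrix (Fin n) (Fin n) ℝ) (q : Fin n → ℝ)
    (Q : Matrix (Fin n) (Fin m) ℝ) : (Fin m → ℝ) → ℝ :=
  phiAux (Qᵀ * A * Q) ((Qᵀ * A) *ᵥ q) (Rq A M q)

namespace IsOrthonormalFrame

section Frame

variable {ι κ : Type*} [Fintype ι] [Fintype κ] [DecidableEq κ] {A M : Matrix ι ι ℝ} {q : ι → ℝ}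
  {Q : Matrix ι κ ℝ}

lemma dotProduct_mulVec_mulVec_eq_zero (hQ : IsOrthonormalFrame M q Q) (hM : M.IsSymm)
    (y : κ → ℝ) : q ⬝ᵥ M *ᵥ (Q *ᵥ y) = 0 := by
  rw [dotProduct_mulVec_comm_of_isSymm hM, mulVec_dotProduct_eq_dotProduct_transpose_mulVec,
    mulVec_mulVec, hQ.transpose_mul_mulVec_eq_zero, dotProduct_zero]

lemma mulVec_dotProduct_mulVec_self (hQ : IsOrthonormalFrame M q Q) (y : κ → ℝ) :
    (Q *ᵥ y) ⬝ᵥ M *ᵥ (Q *ᵥ y) = y ⬝ᵥ y := by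
  rw [mulVec_dotProduct_eq_dotProduct_transpose_mulVec, mulVec_mulVec, mulVec_mulVec,
    hQ.transpose_mul_mul_eq_one, one_mulVec]

lemma mulVec_injective (hQ : IsOrthonormalFrame M q Q) : Function.Injective Q.mulVec :=
  Function.LeftInverse.injective (g := (Qᵀ * M).mulVec) fun y => by
    rw [mulVec_mulVec, hQ.transpose_mul_mul_eq_one, one_mulVec]

lemma posDef_transpose_mul_mul {κ : Type*} [Finite κ] [DecidableEq κ] {Q : Matrix ι κ ℝ}
    (hQ : IsOrthonormalFrame M q Q) (hA : A.PosDef) : (Qᵀ * A * Q).PosDef := by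
  cases nonempty_fintype κ
  simpa using hA.conjTranspose_mul_mul_same hQ.mulVec_injective

lemma dotProduct_mulVec_affine (hQ : IsOrthonormalFrame M q Q) (hM : M.IsSymm) (y : κ → ℝ) :
    q ⬝ᵥ M *ᵥ (Q *ᵥ y + q) = 1 := by
  rw [mulVec_add, dotProduct_add, hQ.dotProduct_mulVec_mulVec_eq_zero hM,
    hQ.dotProduct_self_eq_one, zero_add]

lemma dotProduct_mulVec_affine_self (hQ : IsOrthonormalFrame M q Q) (hM : M.IsSymm)
    (y : κ → ℝ) : (Q *ᵥ y + q) ⬝ᵥ M *ᵥ (Q *ᵥ y + q) = y ⬝ᵥ y + 1 := by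
  rw [dotProduct_mulVec_self_mulVec_add hM, hQ.transpose_mul_mul_eq_one,
    hQ.transpose_mul_mulVec_eq_zero, hQ.dotProduct_self_eq_one, one_mulVec, dotProduct_zero,
    mul_zero, add_zero]

end Frame

section Chart

variable {n m : ℕ} {A M : Matrix (Fin n) (Fin n) ℝ} {q : Fin n → ℝ} {Q : Matrix (Fin n) (Fin m) ℝ}

lemma Mnorm_affine_pos (hQ : IsOrthonormalFrame M q Q) (hM : M.IsSymm) (y : Fin m → ℝ) :
    0 < Mnorm M (Q *ᵥ y + q) := by
  have hy : 0 ≤ y ⬝ᵥ y := by simpa using dotProduct_self_star_nonneg y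
  rw [Mnorm, hQ.dotProduct_mulVec_affine_self hM]
  exact Real.sqrt_pos.mpr (by linarith)

lemma psiMap_psiDag (hQ : IsOrthonormalFrame M q Q) (hM : M.IsSymm) (y : Fin m → ℝ) :
    psiMap M q Q (psiDag M q Q y) = y := by
  rw [psiDag, psiMap_smul _ _ _ (inv_ne_zero (hQ.Mnorm_affine_pos hM y).ne'), psiMap,
    hQ.dotProduct_mulVec_affine hM, inv_one, one_smul, mulVec_add, mulVec_mulVec,
    hQ.transpose_mul_mul_eq_one, hQ.transpose_mul_mulVec_eq_zero, one_mulVec, add_zero]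

lemma psiDag_mem_Splus (hQ : IsOrthonormalFrame M q Q) (hM : M.IsSymm) (y : Fin m → ℝ) :
    psiDag M q Q y ∈ Splus M q := by
  have hpos := inv_pos.mpr (hQ.Mnorm_affine_pos hM y)
  constructor
  · rw [psiDag, Mnorm_smul, abs_of_pos hpos, inv_mul_cancel₀ (hQ.Mnorm_affine_pos hM y).ne']
  · rwa [psiDag, mulVec_smul, dotProduct_smul, hQ.dotProduct_mulVec_affine hM, smul_eq_mul, mul_one]

lemma Rq_psiDag (hQ : IsOrthonormalFrame M q Q) (hA : A.IsSymm) (hM : M.IsSymm)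
    (y : Fin m → ℝ) : Rq A M (psiDag M q Q y) = chartRq A M q Q y := by
  rw [psiDag, Rq_smul _ _ (inv_ne_zero (hQ.Mnorm_affine_pos hM y).ne'), chartRq, phiAux,
    Rq_eq_of_dotProduct_eq_one A hQ.dotProduct_self_eq_one, Rq,
    hQ.dotProduct_mulVec_affine_self hM, dotProduct_mulVec_self_mulVec_add hA]

variable {lam : Fin n → ℝ} {u : Fin n → Fin n → ℝ}

lemma posSemidef_transpose_mul_mul_sub (hQ : IsOrthonormalFrame M q Q) (hA : A.IsSymm)
    (hM : M.IsSymm) (hu : IsPencilEigenbasis A M lam u) {i₀ : Fin n} {μ : ℝ}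
    (hμ₀ : lam i₀ ≤ μ) (hμ : ∀ i ≠ i₀, μ ≤ lam i) (hρ : Rq A M q ≤ (lam i₀ + μ) / 2) :
    (Qᵀ * A * Q - Rq A M q • 1).PosSemidef := by
  have hsymm : (Qᵀ * A * Q - Rq A M q • 1).IsHermitian := by
    simp [isHermitian_iff_isSymm, IsSymm, hA.eq, Matrix.mul_assoc]
  refine .of_dotProduct_mulVec_nonneg hsymm fun y => ?_
  have hyy : 0 ≤ y ⬝ᵥ y := by simpa using dotProduct_self_star_nonneg y
  have hfan := hu.add_mul_le_of_orthogonal hA hM hμ₀ hμ hQ.dotProduct_self_eq_one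
    (hQ.dotProduct_mulVec_mulVec_eq_zero hM y)
  rw [hQ.mulVec_dotProduct_mulVec_self, ← Rq_eq_of_dotProduct_eq_one A hQ.dotProduct_self_eq_one,
    mulVec_dotProduct_eq_dotProduct_transpose_mulVec, mulVec_mulVec, mulVec_mulVec] at hfan
  rw [star_trivial, sub_mulVec, smul_mulVec, one_mulVec, dotProduct_sub, dotProduct_smul,
    smul_eq_mul]
  linarith [mul_le_mul_of_nonneg_right hρ hyy]

lemma le_chartRq (hQ : IsOrthonormalFrame M q Q) (hA : A.IsSymm) (hM : M.IsSymm)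
    (hu : IsPencilEigenbasis A M lam u) {μ : ℝ} (hμ : ∀ i, μ ≤ lam i) (y : Fin m → ℝ) :
    μ ≤ chartRq A M q Q y := by
  rw [← hQ.Rq_psiDag hA hM]
  exact hu.le_Rq hA hM hμ (Mnorm_eq_one_iff.mp (hQ.psiDag_mem_Splus hM y).1)

lemma eq_psiMap_of_chartRq_le (hQ : IsOrthonormalFrame M q Q) (hA : A.IsSymm) (hM : M.IsSymm)
    (hu : IsPencilEigenbasis A M lam u) {i₀ : Fin n} (hlam : ∀ i ≠ i₀, lam i₀ < lam i)
    {y : Fin m → ℝ} (hy : chartRq A M q Q y ≤ lam i₀) : y = psiMap M q Q (u i₀) := by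
  obtain ⟨hMnorm, hpos⟩ := hQ.psiDag_mem_Splus hM y
  set x := psiDag M q Q y with hx
  have hnorm := Mnorm_eq_one_iff.mp hMnorm
  rw [← hQ.Rq_psiDag hA hM, Rq_eq_of_dotProduct_eq_one A hnorm] at hy
  have hparallel : x = (u i₀ ⬝ᵥ M *ᵥ x) • u i₀ :=
    hu.eq_smul_of_dotProduct_mulVec_le hA hM hlam (by rwa [hnorm, mul_one])
  have hcoeff : u i₀ ⬝ᵥ M *ᵥ x ≠ 0 := fun h => by
    rw [h, zero_smul] at hparallel
    simp [hparallel] at hpos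
  rw [← hQ.psiMap_psiDag hM y, ← hx, hparallel, psiMap_smul _ _ _ hcoeff]

end Chart

section SquareFrame

variable {n : ℕ} {A M : Matrix (Fin (n + 1)) (Fin (n + 1)) ℝ} {q x : Fin (n + 1) → ℝ}
  {Q : Matrix (Fin (n + 1)) (Fin n) ℝ}

-- A left inverse of the square matrix `[q, Q]` is also a right inverse.
lemma mulVec_add_smul_eq (hQ : IsOrthonormalFrame M q Q) (hM : M.IsSymm) (x : Fin (n + 1) → ℝ) :
    Q *ᵥ ((Qᵀ * M) *ᵥ x) + (q ⬝ᵥ M *ᵥ x) • q = x := by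
  have hrow : (q ᵥ* M) ᵥ* Q = 0 := by
    rw [← mulVec_transpose, ← mulVec_transpose, hM.eq, mulVec_mulVec,
      hQ.transpose_mul_mulVec_eq_zero]
  have hleft : fromRows (Qᵀ * M) (replicateRow (Fin 1) (q ᵥ* M)) *
      fromCols Q (replicateCol (Fin 1) q) = 1 := by
    rw [fromRows_mul_fromCols, hQ.transpose_mul_mul_eq_one, ← replicateCol_mulVec,
      hQ.transpose_mul_mulVec_eq_zero, ← replicateRow_vecMul, hrow, ← fromBlocks_one]
    congr 1
    ext i j
    change (q ᵥ* M) ⬝ᵥ q = _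
    rw [← dotProduct_mulVec, hQ.dotProduct_self_eq_one, Subsingleton.elim i j, one_apply_eq]
  have hright := (fromCols_mul_fromRows_eq_one_comm finSumFinEquiv.symm _ _ _ _).mpr hleft
  have houter : replicateCol (Fin 1) q * replicateRow (Fin 1) (q ᵥ* M) =
      vecMulVec q (q ᵥ* M) := by
    ext i j
    simp [mul_apply, vecMulVec_apply]
  calc Q *ᵥ ((Qᵀ * M) *ᵥ x) + (q ⬝ᵥ M *ᵥ x) • q
      = (fromCols Q (replicateCol (Fin 1) q) *
          fromRows (Qᵀ * M) (replicateRow (Fin 1) (q ᵥ* M))) *ᵥ x := by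
        rw [fromCols_mul_fromRows, add_mulVec, mulVec_mulVec, houter, vecMulVec_mulVec,
          dotProduct_mulVec, op_smul_eq_smul]
    _ = x := by rw [hright, one_mulVec]

lemma mulVec_psiMap_add (hQ : IsOrthonormalFrame M q Q) (hM : M.IsSymm)
    (hx : q ⬝ᵥ M *ᵥ x ≠ 0) : Q *ᵥ psiMap M q Q x + q = (q ⬝ᵥ M *ᵥ x)⁻¹ • x := by
  calc Q *ᵥ psiMap M q Q x + q
      = (q ⬝ᵥ M *ᵥ x)⁻¹ • (Q *ᵥ ((Qᵀ * M) *ᵥ x) + (q ⬝ᵥ M *ᵥ x) • q) := by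
        rw [psiMap, mulVec_smul, smul_add, inv_smul_smul₀ hx]
    _ = (q ⬝ᵥ M *ᵥ x)⁻¹ • x := by rw [hQ.mulVec_add_smul_eq hM]

lemma psiDag_psiMap (hQ : IsOrthonormalFrame M q Q) (hM : M.IsSymm) (hx : x ∈ Splus M q) :
    psiDag M q Q (psiMap M q Q x) = x := by
  obtain ⟨hnorm, hpos⟩ := hx
  rw [psiDag, hQ.mulVec_psiMap_add hM hpos.ne', Mnorm_smul, hnorm, mul_one,
    abs_of_pos (inv_pos.mpr hpos), inv_smul_smul₀ (inv_ne_zero hpos.ne')]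

lemma chartRq_psiMap (hQ : IsOrthonormalFrame M q Q) (hA : A.IsSymm) (hM : M.IsSymm)
    (hx : x ∈ Splus M q) : chartRq A M q Q (psiMap M q Q x) = Rq A M x := by
  rw [← hQ.Rq_psiDag hA hM, hQ.psiDag_psiMap hM hx]

lemma image_psiMap_Xset (hQ : IsOrthonormalFrame M q Q) (hA : A.IsSymm) (hM : M.IsSymm) :
    psiMap M q Q '' Xset A M q = {y | chartRq A M q Q y ≤ Rq A M q} := by
  ext y
  constructor
  · rintro ⟨x, ⟨hx, hRq⟩, rfl⟩
    rwa [Set.mem_ofPred_eq, hQ.chartRq_psiMap hA hM hx]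
  · intro hy
    exact ⟨psiDag M q Q y, ⟨hQ.psiDag_mem_Splus hM y, (hQ.Rq_psiDag hA hM y).trans_le hy⟩,
      hQ.psiMap_psiDag hM y⟩

end SquareFrame

end IsOrthonormalFrame

lemma le_midpoint_of_le_add_div {a b ρ χ : ℝ} (hab : a ≤ b) (hχ : 0 ≤ χ)
    (hρ : ρ ≤ a + (b - a) / (2 + χ)) : ρ ≤ (a + b) / 2 := by
  have hdiv : (b - a) / (2 + χ) ≤ (b - a) / 2 :=
    div_le_div_of_nonneg_left (sub_nonneg.mpr hab) two_pos (by linarith)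
  linarith

theorem stmt_11_general {n : ℕ} {A M : Matrix (Fin (n + 2)) (Fin (n + 2)) ℝ}
    (hA : A.IsSymm) (hM : M.IsSymm) {q : Fin (n + 2) → ℝ}
    {Q : Matrix (Fin (n + 2)) (Fin (n + 1)) ℝ} (hQ : IsOrthonormalFrame M q Q)
    {lam : Fin (n + 2) → ℝ} {u : Fin (n + 2) → Fin (n + 2) → ℝ}
    (hu : IsPencilEigenbasis A M lam u) (hlam01 : lam 0 < lam 1) (hmono : Monotone lam)
    (hqu : 0 < q ⬝ᵥ M *ᵥ u 0) (hρ : Rq A M q ≤ (lam 0 + lam 1) / 2) :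
    Convex ℝ (psiMap M q Q '' Xset A M q) ∧
    psiMap M q Q (u 0) ∈ psiMap M q Q '' Xset A M q ∧
    (∀ y ∈ psiMap M q Q '' Xset A M q,
      chartRq A M q Q (psiMap M q Q (u 0)) ≤ chartRq A M q Q y) ∧
    (∀ y ∈ psiMap M q Q '' Xset A M q,
      (∀ y' ∈ psiMap M q Q '' Xset A M q, chartRq A M q Q y ≤ chartRq A M q Q y') →
        y = psiMap M q Q (u 0)) ∧
    chartRq A M q Q (psiMap M q Q (u 0)) = lam 0 ∧
    u 0 = psiDag M q Q (psiMap M q Q (u 0)) := by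
  have hgap : ∀ i ≠ 0, lam 1 ≤ lam i := fun i hi => hmono (Fin.one_le_of_ne_zero hi)
  have hmin : ∀ i, lam 0 ≤ lam i := fun i => hmono (Fin.zero_le i)
  have hu0 : u 0 ∈ Splus M q := ⟨Mnorm_eq_one_iff.mpr (hu.dotProduct_self_eq_one 0), hqu⟩
  have hval : chartRq A M q Q (psiMap M q Q (u 0)) = lam 0 := by
    rw [hQ.chartRq_psiMap hA hM hu0, hu.Rq_eigenvector]
  have hmem : psiMap M q Q (u 0) ∈ psiMap M q Q '' Xset A M q := by
    refine Set.mem_image_of_mem _ ⟨hu0, ?_⟩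
    rw [hu.Rq_eigenvector]
    exact hu.le_Rq hA hM hmin hQ.dotProduct_self_eq_one
  refine ⟨?convex, hmem, fun y _ => hval.trans_le (hQ.le_chartRq hA hM hu hmin y), ?unique, hval,
    (hQ.psiDag_psiMap hM hu0).symm⟩
  case convex =>
    rw [hQ.image_psiMap_Xset hA hM]
    exact convex_setOf_phiAux_le_self
      (hQ.posSemidef_transpose_mul_mul_sub hA hM hu hlam01.le hgap hρ) _
  case unique =>
    exact fun y _ hy => hQ.eq_psiMap_of_chartRq_le hA hM hu
      (fun i hi => hlam01.trans_le (hgap i hi)) ((hy _ hmem).trans_eq hval)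

/-- Under λ₁ ≤ ρ_q ≤ λ₁ + (λ₂−λ₁)/(2+χ_P): (1) Y is convex; (2) min_{y∈Y} φ has
unique solution y* = ψ(u₁) with φ(y*) = λ₁; (3) u₁ = ψ†(y*). -/
theorem stmt_11 (n : ℕ)
    (A M : Matrix (Fin (n+2)) (Fin (n+2)) ℝ)
    (hA : A.PosDef) (hM : M.PosDef)
    (q : Fin (n+2) → ℝ) (Q : Matrix (Fin (n+2)) (Fin (n+1)) ℝ)
    (hq1 : q ⬝ᵥ (M *ᵥ q) = 1)
    (hQMQ : Qᵀ * M * Q = 1)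
    (hQMq : (Qᵀ * M) *ᵥ q = 0)
    (lam : Fin (n+2) → ℝ) (u : Fin (n+2) → Fin (n+2) → ℝ)
    (hlam0 : 0 < lam 0) (hlam01 : lam 0 < lam 1) (hmono : Monotone lam)
    (heig : ∀ i, A *ᵥ u i = lam i • (M *ᵥ u i))
    (horth : ∀ i j, u i ⬝ᵥ (M *ᵥ u j) = if i = j then (1:ℝ) else 0)
    (hqu1 : 0 < q ⬝ᵥ (M *ᵥ u 0))
    (B : Matrix (Fin (n+1)) (Fin (n+1)) ℝ) (hB : B = Qᵀ * A * Q)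
    (b : Fin (n+1) → ℝ) (hb : b = (Qᵀ * A) *ᵥ q)
    (ρq : ℝ) (hρq : ρq = Rq A M q)
    (P : Matrix (Fin (n+1)) (Fin (n+1)) ℝ) (hP : P.PosDef)
    (ximin ximax : ℝ)
    (hximin : IsLeast {ξ : ℝ | ∃ v : Fin (n+1) → ℝ, v ≠ 0 ∧ B *ᵥ v = ξ • (P *ᵥ v)} ximin)
    (hximax : IsGreatest {ξ : ℝ | ∃ v : Fin (n+1) → ℝ, v ≠ 0 ∧ B *ᵥ v = ξ • (P *ᵥ v)} ximax)
    (χP : ℝ)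
    (hχP : χP = (8 * lam 1 / lam 0) * (ximax / ximin) *
      Real.sqrt ((lam 1 + lam 0) / (2 * (lam 1 - lam 0))))
    (hρ1 : lam 0 ≤ ρq) (hρ2 : ρq ≤ lam 0 + (lam 1 - lam 0) / (2 + χP))
    (ystar : Fin (n+1) → ℝ) (hystar : ystar = psiMap M q Q (u 0)) :
    Convex ℝ (psiMap M q Q '' (Xset A M q)) ∧
    ystar ∈ psiMap M q Q '' (Xset A M q) ∧
    (∀ y ∈ psiMap M q Q '' (Xset A M q), phiAux B b ρq ystar ≤ phiAux B b ρq y) ∧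
    (∀ y ∈ psiMap M q Q '' (Xset A M q),
      (∀ y' ∈ psiMap M q Q '' (Xset A M q), phiAux B b ρq y ≤ phiAux B b ρq y') →
        y = ystar) ∧
    phiAux B b ρq ystar = lam 0 ∧
    u 0 = psiDag M q Q ystar := by
  subst hB hb hρq hχP hystar
  have hQ : IsOrthonormalFrame M q Q := ⟨hq1, hQMQ, hQMq⟩
  obtain ⟨vmin, hvmin, hBvmin⟩ := hximin.1
  obtain ⟨vmax, hvmax, hBvmax⟩ := hximax.1
  have hximin_pos : 0 < ximin :=
    pos_of_mulVec_eq_smul_mulVec (hQ.posDef_transpose_mul_mul hA) hP hvmin hBvmin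
  have hximax_pos : 0 < ximax :=
    pos_of_mulVec_eq_smul_mulVec (hQ.posDef_transpose_mul_mul hA) hP hvmax hBvmax
  have hlam1 : 0 < lam 1 := hlam0.trans hlam01
  exact stmt_11_general (isHermitian_iff_isSymm.mp hA.isHermitian)
    (isHermitian_iff_isSymm.mp hM.isHermitian) hQ ⟨heig, horth⟩ hlam01 hmono hqu1
    (le_midpoint_of_le_add_div hlam01.le (by positivity) hρ2)
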